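/- arXiv:2302.06269 — 4 statements merged into one kernel-verified Lean document; each statement's English description precedes it below -/
import Mathlib

section
/- Let σ, β, R, Π be strictly positive real numbers and define the quartic polynomial Γ(X) = (σπ² + βπ²R) X⁴ − π²σR X³ − βΠ²R, viewed as a polynomial with real coefficients. Then Γ has exactly two distinct real roots, and, regarded as a polynomial over ℂ, its remaining two roots are non-real and are complex conjugates of each other. -/
open Polynomial

lemma quartic_real (A B D : ℝ) (hA : 0 < A) (hB : 0 < B) (hD : 0 < D) :
    ∃ x y p q : ℝ, y < 0 ∧ 0 < x ∧
      (∀ t : ℝ, A * t ^ 4 - B * t ^ 3 - D = (t - x) * (t - y) * (A * t ^ 2 + p * t + q)) ∧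
      p = (x + y) * A - B ∧ q = (x + y) * p - x * y * A ∧ x * y * p = (x + y) * q ∧
      x * y * q = -D ∧ p ^ 2 < 4 * A * q := by
  obtain ⟨T, hT1, hT⟩ : ∃ T : ℝ, 1 ≤ T ∧ A * T = A + B + D :=
    ⟨(A + B + D) / A, by rw [le_div_iff₀ hA]; linarith, by field_simp⟩
  have hT3 : 1 ≤ T ^ 3 := one_le_pow₀ hT1
  have hc : Continuous (fun t : ℝ => A * t ^ 4 - B * t ^ 3 - D) := by fun_prop
  have e4 : A * T ^ 4 = (A + B + D) * T ^ 3 := by rw [← hT]; ring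
  obtain ⟨x, hx, hfx⟩ := intermediate_value_Icc (by linarith : (0 : ℝ) ≤ T) hc.continuousOn
    (show (0 : ℝ) ∈ Set.Icc _ _ from ⟨by simp; linarith, by nlinarith⟩)
  obtain ⟨y, hy, hfy⟩ := intermediate_value_Icc' (by linarith : -T ≤ (0 : ℝ)) hc.continuousOn
    (show (0 : ℝ) ∈ Set.Icc _ _ from ⟨by simp; linarith, by
      have : (-T) ^ 4 = T ^ 4 := by ring
      have : (-T) ^ 3 = - T ^ 3 := by ring
      simp only [*]; nlinarith⟩)
  simp only at hfx hfy
  have hx0 : 0 < x := lt_of_le_of_ne hx.1 (by rintro rfl; norm_num at hfx; linarith)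
  have hy0 : y < 0 := lt_of_le_of_ne hy.2 (by rintro rfl; norm_num at hfy; linarith)
  obtain ⟨p, hp⟩ : ∃ p, p = (x + y) * A - B := ⟨_, rfl⟩
  obtain ⟨q, hq⟩ : ∃ q, q = (x + y) * p - x * y * A := ⟨_, rfl⟩
  have h1 : x * y * p = (x + y) * q := by
    have : (x - y) * (x * y * p - (x + y) * q) = 0 := by
      rw [hq, hp]; linear_combination hfy - hfx
    rcases mul_eq_zero.1 this with h | h <;> linarith
  have h0 : x * y * q = -D := by
    rw [hq, hp] at h1 ⊢
    linear_combination (-1) * hfx - x * h1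
  have hm : x * y < 0 := mul_neg_of_pos_of_neg hx0 hy0
  have hq0 : 0 < q := by
    by_contra h
    nlinarith [mul_nonneg_of_nonpos_of_nonpos hm.le (not_lt.1 h)]
  refine ⟨x, y, p, q, hy0, hx0, fun t => ?_, hp, hq, h1, h0, ?_⟩
  · rw [hq, hp] at h1 h0 ⊢
    linear_combination -t * h1 - h0
  · have hm2 : 0 < (x * y) ^ 2 := by nlinarith
    have key : (x * y) ^ 2 * (p ^ 2 - 4 * A * q) = q ^ 2 * (4 * (x * y) - 3 * (x + y) ^ 2) := by
      linear_combination (x * y * p + (x + y) * q) * h1 - 4 * q * (x * y) * hq - 4 * q * (x + y) * h1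
    have : q ^ 2 * (4 * (x * y) - 3 * (x + y) ^ 2) < 0 :=
      mul_neg_of_pos_of_neg (by positivity) (by nlinarith [sq_nonneg (x + y)])
    rw [← key] at this
    have := neg_of_mul_neg_right this hm2.le
    linarith

/-- The quartic Γ(X) = (σπ² + βπ²R)X⁴ − π²σR X³ − βΠ²R (with Π written `P`) has
exactly two distinct real roots, and its two remaining complex roots are non-real
complex conjugates of each other. -/
theorem stmt_1 (σ β R P : ℝ) (hσ : 0 < σ) (hβ : 0 < β) (hR : 0 < R) (hP : 0 < P) :
    ∃ x y : ℝ, x ≠ y ∧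
      (∀ t : ℝ, ((C (σ * Real.pi ^ 2 + β * Real.pi ^ 2 * R)) * X ^ 4
          - (C (Real.pi ^ 2 * σ * R)) * X ^ 3 - C (β * P ^ 2 * R)).eval t = 0 ↔
          t = x ∨ t = y) ∧
      ∃ z : ℂ, z.im ≠ 0 ∧
        (((C (σ * Real.pi ^ 2 + β * Real.pi ^ 2 * R)) * X ^ 4
          - (C (Real.pi ^ 2 * σ * R)) * X ^ 3
          - C (β * P ^ 2 * R)).map (algebraMap ℝ ℂ)).roots
          = {(x : ℂ), (y : ℂ), z, (starRingEnd ℂ) z} := by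
  have hpi := Real.pi_pos
  have hA : 0 < σ * Real.pi ^ 2 + β * Real.pi ^ 2 * R := by positivity
  have hB : 0 < Real.pi ^ 2 * σ * R := by positivity
  have hD : 0 < β * P ^ 2 * R := by positivity
  generalize σ * Real.pi ^ 2 + β * Real.pi ^ 2 * R = A at *
  generalize Real.pi ^ 2 * σ * R = B at *
  generalize β * P ^ 2 * R = D at *
  obtain ⟨x, y, p, q, hy, hx, hf, hp, hq, h1, h0, hd⟩ := quartic_real A B D hA hB hD
  refine ⟨x, y, by linarith, fun t => ?_, ?_⟩
  · have hpos : A * t ^ 2 + p * t + q ≠ 0 := by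
      intro h
      nlinarith [sq_nonneg (2 * A * t + p)]
    simp only [eval_sub, eval_mul, eval_C, eval_pow, eval_X]
    rw [hf, mul_eq_zero, or_iff_left hpos, mul_eq_zero, sub_eq_zero, sub_eq_zero]
  · obtain ⟨v, hv0, hv⟩ : ∃ v : ℝ, 0 < v ∧ v ^ 2 = 4 * A * q - p ^ 2 :=
      ⟨√(4 * A * q - p ^ 2), Real.sqrt_pos.2 (by linarith), Real.sq_sqrt (by linarith)⟩
    let z : ℂ := ⟨-p / (2 * A), v / (2 * A)⟩
    have hs : (A : ℂ) * (z + (starRingEnd ℂ) z) = -p := by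
      rw [Complex.add_conj]
      norm_cast
      simp only [z]
      field_simp
    have hm : (A : ℂ) * (z * (starRingEnd ℂ) z) = q := by
      rw [Complex.mul_conj]
      norm_cast
      simp only [z, Complex.normSq_apply]
      field_simp
      linarith
    refine ⟨z, by simp only [z]; positivity, ?_⟩
    have hAC : (A : ℂ) ≠ 0 := by exact_mod_cast hA.ne'
    have key : ((C A * X ^ 4 - C B * X ^ 3 - C D).map (algebraMap ℝ ℂ)) =
        C (A : ℂ) * (Multiset.map (fun a => X - C a)
          {(x : ℂ), (y : ℂ), z, (starRingEnd ℂ) z}).prod := by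
      apply Polynomial.funext
      intro w
      have hp' : (p : ℂ) = (x + y) * A - B := by exact_mod_cast hp
      have hq' : (q : ℂ) = (x + y) * p - x * y * A := by exact_mod_cast hq
      have h1' : (x : ℂ) * y * p = (x + y) * q := by exact_mod_cast h1
      have h0' : (x : ℂ) * y * q = -D := by exact_mod_cast h0
      simp only [Multiset.insert_eq_cons, Multiset.map_cons, Multiset.prod_cons,
        Multiset.map_singleton, Multiset.prod_singleton, Polynomial.map_sub, Polynomial.map_mul,
        Polynomial.map_pow, map_C, map_X, eval_sub, eval_mul, eval_C, eval_pow, eval_X,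
        Complex.coe_algebraMap]
      generalize (starRingEnd ℂ) z = z' at *
      have e : (A : ℂ) * ((w - x) * ((w - y) * ((w - z) * (w - z')))) =
          (w - x) * (w - y) * (A * w ^ 2 + p * w + q) := by
        linear_combination (w - x) * (w - y) * (hm - w * hs)
      rw [e]
      linear_combination -w * h1' - h0' - w ^ 3 * hp' - w ^ 2 * hq'
    rw [key, roots_C_mul _ hAC, roots_multiset_prod_X_sub_C]
end

section
/- Let σ, β, R, Π be strictly positive real numbers with R > √(Π/π), define Γ(a) = σπ²a⁴ + βπ²R a⁴ − π²σR a³ − βΠ²R, and let ā > 0 be the unique positive real root of Γ. Then √(Π/π) < ā < R. In particular, setting b̄ = Π/(π ā) (so that the ellipse with semi-axes ā and b̄ has area Π), one has ā > b̄. -/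
/-- If R > √(Π/π) and ā is the unique positive real root of
Γ(a) = σπ²a⁴ + βπ²R a⁴ − π²σR a³ − βΠ²R (with Π written `P`), then
√(Π/π) < ā < R; in particular ā > b̄ where b̄ = Π/(π ā). -/
theorem stmt_5 (σ β R P abar : ℝ) (hσ : 0 < σ) (hβ : 0 < β) (hR : 0 < R) (hP : 0 < P)
    (hRbig : Real.sqrt (P / Real.pi) < R)
    (habar : 0 < abar)
    (hroot : σ * Real.pi ^ 2 * abar ^ 4 + β * Real.pi ^ 2 * R * abar ^ 4
        - Real.pi ^ 2 * σ * R * abar ^ 3 - β * P ^ 2 * R = 0)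
    (huniq : ∀ a : ℝ, 0 < a →
      σ * Real.pi ^ 2 * a ^ 4 + β * Real.pi ^ 2 * R * a ^ 4
        - Real.pi ^ 2 * σ * R * a ^ 3 - β * P ^ 2 * R = 0 → a = abar) :
    Real.sqrt (P / Real.pi) < abar ∧ abar < R ∧ P / (Real.pi * abar) < abar := by
  have hpi := Real.pi_pos
  set s := Real.sqrt (P / Real.pi) with hs
  have hs0 : 0 ≤ s := Real.sqrt_nonneg _
  have hsq : s ^ 2 = P / Real.pi := Real.sq_sqrt (by positivity)
  have hPs : P = Real.pi * s ^ 2 := by rw [hsq]; field_simp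
  have key : σ * abar ^ 3 * (abar - R) + β * R * (abar ^ 4 - s ^ 4) = 0 := by
    have h : Real.pi ^ 2 * (σ * abar ^ 3 * (abar - R) + β * R * (abar ^ 4 - s ^ 4)) = 0 := by
      rw [hPs] at hroot
      linear_combination hroot
    exact (mul_eq_zero.mp h).resolve_left (by positivity)
  have h2 : abar < R := by
    by_contra hc
    have hc' : 0 ≤ abar - R := by linarith
    have h4 : s ^ 4 < abar ^ 4 := pow_lt_pow_left₀ (by linarith) hs0 (by norm_num)
    have e1 : 0 ≤ σ * abar ^ 3 * (abar - R) := by positivity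
    have e2 : 0 < β * R * (abar ^ 4 - s ^ 4) := mul_pos (by positivity) (by linarith)
    linarith
  have h1 : s < abar := by
    by_contra hc
    have h4 : abar ^ 4 ≤ s ^ 4 := pow_le_pow_left₀ habar.le (by linarith) 4
    have e1 : 0 < σ * abar ^ 3 * (R - abar) := mul_pos (by positivity) (by linarith)
    have e2 : 0 ≤ β * R * (s ^ 4 - abar ^ 4) := mul_nonneg (by positivity) (by linarith)
    linarith
  refine ⟨h1, h2, ?_⟩
  have h5 : s ^ 2 < abar ^ 2 := pow_lt_pow_left₀ h1 hs0 (by norm_num)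
  rw [div_lt_iff₀ (by positivity)]
  have h6 : Real.pi * s ^ 2 < Real.pi * abar ^ 2 := mul_lt_mul_of_pos_left h5 hpi
  calc P = Real.pi * s ^ 2 := hPs
    _ < Real.pi * abar ^ 2 := h6
    _ = abar * (Real.pi * abar) := by ring
end

section
/- Let σ, β, R, Π be strictly positive real numbers and let a, b be real numbers satisfying the hyperbola equation 2a² − b² + (1 + 2βR/σ)ab − 2Ra + Rb = 0 and the ellipse equation 2a² + b² = 2Π/π. Then a is a root of the quartic (18σ² + 8β²R² + 8βRσ)π²a⁴ + (−12π²Rσ² + 8π²βR²σ)a³ + (6π²R²σ² − 8πΠβ²R² − 18πΠσ² − 8πΠβRσ)a² + (−8ΠβR²σ + 4ΠRσ²)πa + (4Π² − 2πΠR²)σ² = 0. -/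
/-- If (a, b) lies on the hyperbola 2a² − b² + (1 + 2βR/σ)ab − 2Ra + Rb = 0 and on
the ellipse 2a² + b² = 2Π/π (Π written `P`), then a is a root of the eliminant quartic. -/
theorem stmt_14 (σ β R P a b : ℝ) (hσ : 0 < σ) (hβ : 0 < β) (hR : 0 < R) (hP : 0 < P)
    (hhyp : 2 * a ^ 2 - b ^ 2 + (1 + 2 * β * R / σ) * a * b - 2 * R * a + R * b = 0)
    (hell : 2 * a ^ 2 + b ^ 2 = 2 * P / Real.pi) :
    (18 * σ ^ 2 + 8 * β ^ 2 * R ^ 2 + 8 * β * R * σ) * Real.pi ^ 2 * a ^ 4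
      + (-12 * Real.pi ^ 2 * R * σ ^ 2 + 8 * Real.pi ^ 2 * β * R ^ 2 * σ) * a ^ 3
      + (6 * Real.pi ^ 2 * R ^ 2 * σ ^ 2 - 8 * Real.pi * P * β ^ 2 * R ^ 2
          - 18 * Real.pi * P * σ ^ 2 - 8 * Real.pi * P * β * R * σ) * a ^ 2
      + (-8 * P * β * R ^ 2 * σ + 4 * P * R * σ ^ 2) * Real.pi * a
      + (4 * P ^ 2 - 2 * Real.pi * P * R ^ 2) * σ ^ 2 = 0 := by
  have hpi : Real.pi ≠ 0 := Real.pi_ne_zero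
  have hPe : P = Real.pi * (2 * a ^ 2 + b ^ 2) / 2 := by
    rw [hell]; field_simp
  have hs : σ ≠ 0 := hσ.ne'
  have hH : σ * (2 * a ^ 2 - b ^ 2 - 2 * R * a)
      + ((σ + 2 * β * R) * a + R * σ) * b = 0 := by
    have h : σ * (2 * a ^ 2 - b ^ 2 - 2 * R * a) + ((σ + 2 * β * R) * a + R * σ) * b
        = σ * (2 * a ^ 2 - b ^ 2 + (1 + 2 * β * R / σ) * a * b - 2 * R * a + R * b) := by
      field_simp
      ring
    rw [h, hhyp, mul_zero]
  clear hell hhyp hP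
  subst hPe
  linear_combination (Real.pi ^ 2 * (σ * (2 * a ^ 2 - b ^ 2 - 2 * R * a)
      - ((σ + 2 * β * R) * a + R * σ) * b)) * hH
end

section
/- Let σ, β, R, Π be strictly positive real numbers and set a = √(8Π/(9π)) and b = √(2Π/(9π)) (so that a = 2b and 2a² + b² = 2Π/π). Then the pair (a, b) satisfies the hyperbola equation 2a² − b² + (1 + 2βR/σ)ab − 2Ra + Rb = 0 if and only if Π/(πR²) = 2/(2 + 8βR/(9σ))². -/
/-- For a = √(8Π/(9π)), b = √(2Π/(9π)) (Π written `P`), the pair (a, b) satisfies the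
hyperbola equation 2a² − b² + (1 + 2βR/σ)ab − 2Ra + Rb = 0 if and only if
Π/(πR²) = 2/(2 + 8βR/(9σ))². -/
theorem stmt_15 (σ β R P : ℝ) (hσ : 0 < σ) (hβ : 0 < β) (hR : 0 < R) (hP : 0 < P) :
    (2 * (Real.sqrt (8 * P / (9 * Real.pi))) ^ 2 - (Real.sqrt (2 * P / (9 * Real.pi))) ^ 2
        + (1 + 2 * β * R / σ) * Real.sqrt (8 * P / (9 * Real.pi))
            * Real.sqrt (2 * P / (9 * Real.pi))
        - 2 * R * Real.sqrt (8 * P / (9 * Real.pi))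
        + R * Real.sqrt (2 * P / (9 * Real.pi)) = 0
      ↔ P / (Real.pi * R ^ 2) = 2 / (2 + 8 * β * R / (9 * σ)) ^ 2) := by
  have hpi := Real.pi_pos
  have ha : Real.sqrt (8 * P / (9 * Real.pi)) = 2 * Real.sqrt (2 * P / (9 * Real.pi)) := by
    rw [show 8 * P / (9 * Real.pi) = 2 ^ 2 * (2 * P / (9 * Real.pi)) by ring,
      Real.sqrt_mul (by norm_num), Real.sqrt_sq (by norm_num)]
  have hb : 0 < Real.sqrt (2 * P / (9 * Real.pi)) := Real.sqrt_pos.mpr (by positivity)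
  have hb2 : Real.sqrt (2 * P / (9 * Real.pi)) ^ 2 = 2 * P / (9 * Real.pi) :=
    Real.sq_sqrt (by positivity)
  rw [ha]
  generalize Real.sqrt (2 * P / (9 * Real.pi)) = b at *
  have hk : 0 < β * R / σ := by positivity
  rw [show 2 * β * R / σ = 2 * (β * R / σ) by ring,
    show 8 * β * R / (9 * σ) = 8 / 9 * (β * R / σ) by field_simp]
  generalize β * R / σ = k at *
  have hL : P / (Real.pi * R ^ 2) = 9 / 2 * b ^ 2 / R ^ 2 := by
    rw [hb2]; field_simp
  have h1 : 2 * (2 * b) ^ 2 - b ^ 2 + (1 + 2 * k) * (2 * b) * b - 2 * R * (2 * b) + R * b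
      = b * ((9 + 4 * k) * b - 3 * R) := by ring
  have hD : 0 < 2 + 8 / 9 * k := by positivity
  rw [hL, h1, mul_eq_zero, or_iff_right hb.ne', sub_eq_zero,
    div_eq_div_iff (by positivity) (by positivity)]
  rw [← sq_eq_sq₀ (by positivity) (by positivity)]
  constructor <;> intro h
  · linear_combination (2 / 9) * h
  · linear_combination (9 / 2) * h
end
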